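/- arXiv:0806.2820 — 3 statements merged into one kernel-verified Lean document; each statement's English description precedes it below -/
import Mathlib

section
/- A linear map T on d×d complex matrices that is positive and trace-preserving satisfies ‖T‖_{2→2} ≤ 1 (i.e., its matrix representation on Hilbert–Schmidt space is a contraction in operator norm) if and only if T is unital, i.e., T(I) = I. Consequently, T is unital iff its Hilbert–Schmidt matrix representation is a convex combination of unitary matrices on C^{d²}. -/
open Matrix
open scoped ComplexOrder

open scoped MatrixOrder in
theorem Matrix.PosSemidef.trace_mul_re_nonneg {n : Type*} [Fintype n] {A B : Matrix n n ℂ}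
    (hA : A.PosSemidef) (hB : B.PosSemidef) : 0 ≤ (A * B).trace.re := by
  classical
  obtain ⟨C, rfl⟩ := CStarAlgebra.nonneg_iff_eq_star_mul_self.mp hA.nonneg
  rw [star_eq_conjTranspose]
  rw [Matrix.mul_assoc, Matrix.trace_mul_comm]
  exact (Complex.le_def.mp (hB.mul_mul_conjTranspose_same C).trace_nonneg).1

section Contraction

variable {E : Type*} [NormedAddCommGroup E] [InnerProductSpace ℂ E] [FiniteDimensional ℂ E]

/-- **Polar decomposition** in finite dimension, with an isometric polar factor. -/
theorem ContinuousLinearMap.exists_linearIsometry_comp_abs [CompleteSpace E] (f : E →L[ℂ] E) :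
    ∃ u : E →ₗᵢ[ℂ] E, ∀ x, u (CFC.abs f x) = f x := by
  have hn : ∀ x, ‖CFC.abs f x‖ = ‖f x‖ := by
    intro x
    have h1 : star (CFC.abs f) * CFC.abs f = star f * f := by
      rw [(CFC.abs_nonneg f).star_eq, CFC.abs_mul_abs]
    rw [ContinuousLinearMap.star_eq_adjoint, ContinuousLinearMap.star_eq_adjoint] at h1
    rw [← sq_eq_sq₀ (norm_nonneg _) (norm_nonneg _),
      ContinuousLinearMap.apply_norm_sq_eq_inner_adjoint_left,
      ContinuousLinearMap.apply_norm_sq_eq_inner_adjoint_left]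
    exact congrArg (fun g : E →L[ℂ] E => RCLike.re (inner ℂ (g x) x)) h1
  let a : E →ₗ[ℂ] E := (CFC.abs f : E →L[ℂ] E)
  have hker : LinearMap.ker a ≤ LinearMap.ker (f : E →ₗ[ℂ] E) := by
    intro x hx
    have hx' : CFC.abs f x = 0 := hx
    have := hn x
    rw [hx', norm_zero] at this
    exact norm_eq_zero.mp this.symm
  let L : LinearMap.range a →ₗ[ℂ] E :=
    (LinearMap.ker a).liftQ (f : E →ₗ[ℂ] E) hker ∘ₗ a.quotKerEquivRange.symm.toLinearMap
  have hL : ∀ x, L ⟨a x, LinearMap.mem_range_self a x⟩ = f x := by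
    intro x
    simp [L, LinearMap.quotKerEquivRange_symm_apply_image]
  let L' : LinearMap.range a →ₗᵢ[ℂ] E := ⟨L, by
    rintro ⟨_, x, rfl⟩
    rw [hL]
    exact (hn x).symm⟩
  exact ⟨L'.extend, fun x => (L'.extend_apply ⟨a x, LinearMap.mem_range_self a x⟩).trans (hL x)⟩

/-- A contraction of a finite-dimensional Hilbert space is the midpoint of two linear isometries. -/
theorem exists_half_sum_linearIsometry (f : E →L[ℂ] E) (hf : ‖f‖ ≤ 1) :
    ∃ u v : E →ₗᵢ[ℂ] E, ∀ x, f x = (1 / 2 : ℂ) • u x + (1 / 2 : ℂ) • v x := by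
  have : CompleteSpace E := FiniteDimensional.complete ℂ E
  obtain ⟨w, hw⟩ := f.exists_linearIsometry_comp_abs
  let b : selfAdjoint (E →L[ℂ] E) := ⟨CFC.abs f, (CFC.abs_nonneg f).isSelfAdjoint⟩
  have hb : ‖b‖ ≤ 1 := (CFC.norm_abs (a := f)).trans_le hf
  let s := selfAdjoint.unitarySelfAddISMul b hb
  let u := (Unitary.linearIsometryEquiv s).toLinearIsometry
  let v := (Unitary.linearIsometryEquiv (star s)).toLinearIsometry
  refine ⟨w.comp u, w.comp v, fun x => ?_⟩
  have hu : u x = (s : E →L[ℂ] E) x := rfl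
  have hv : v x = ((star s : unitary (E →L[ℂ] E)) : E →L[ℂ] E) x := rfl
  rw [← hw, LinearIsometry.coe_comp, LinearIsometry.coe_comp, Function.comp_apply,
    Function.comp_apply, ← w.map_smul, ← w.map_smul, ← w.map_add, hu, hv, Unitary.coe_star,
    selfAdjoint.star_coe_unitarySelfAddISMul, selfAdjoint.unitarySelfAddISMul_coe]
  congr 1
  simp only [_root_.add_apply, _root_.sub_apply]
  simp only [b]
  module

end Contraction

section HilbertSchmidt

variable {n : Type*} [Fintype n]

theorem Matrix.trace_conjTranspose_mul_self_re_nonneg (A : Matrix n n ℂ) :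
    0 ≤ (Aᴴ * A).trace.re :=
  (Complex.le_def.mp (posSemidef_conjTranspose_mul_self A).trace_nonneg).1

/-- Matrices as a Euclidean space carrying the Hilbert–Schmidt inner product. -/
noncomputable def hilbertSchmidtEquiv (n : Type*) [Fintype n] :
    Matrix n n ℂ ≃ₗ[ℂ] EuclideanSpace ℂ (n × n) :=
  (LinearEquiv.curry ℂ ℂ n n).symm ≪≫ₗ (WithLp.linearEquiv 2 ℂ (n × n → ℂ)).symm

theorem inner_hilbertSchmidtEquiv (A B : Matrix n n ℂ) :
    inner ℂ (hilbertSchmidtEquiv n A) (hilbertSchmidtEquiv n B) = (Aᴴ * B).trace := by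
  rw [PiLp.inner_apply, Fintype.sum_prod_type_right]
  simp only [Matrix.trace, Matrix.mul_apply, Matrix.diag_apply, Matrix.conjTranspose_apply]
  refine Finset.sum_congr rfl fun i _ => Finset.sum_congr rfl fun j _ => ?_
  exact mul_comm _ _

theorem norm_hilbertSchmidtEquiv (A : Matrix n n ℂ) :
    ‖hilbertSchmidtEquiv n A‖ = Real.sqrt ((Aᴴ * A).trace.re) := by
  rw [norm_eq_sqrt_re_inner (𝕜 := ℂ), inner_hilbertSchmidtEquiv]; rfl

theorem trace_conjTranspose_mul_self_add_I_smul {X Y : Matrix n n ℂ} (hX : X.IsHermitian)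
    (hY : Y.IsHermitian) : ((X + Complex.I • Y)ᴴ * (X + Complex.I • Y)).trace.re =
      (X * X).trace.re + (Y * Y).trace.re := by
  simp [add_mul, mul_add, hX.eq, hY.eq, trace_mul_comm Y X]

variable [DecidableEq n] {T : Matrix n n ℂ →ₗ[ℂ] Matrix n n ℂ}

/-- A trace-preserving map that does not increase the Hilbert–Schmidt norm of `1` is unital. -/
theorem map_one_of_contraction (htp : ∀ A, (T A).trace = A.trace)
    (h : ((T 1)ᴴ * T 1).trace.re ≤ ((1 : Matrix n n ℂ)ᴴ * 1).trace.re) : T 1 = 1 := by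
  rw [← sub_eq_zero, ← Matrix.trace_conjTranspose_mul_self_eq_zero_iff]
  have h0 := posSemidef_conjTranspose_mul_self (T 1 - 1)
  have h1 : ((T 1 - 1)ᴴ * (T 1 - 1)).trace.re
      = ((T 1)ᴴ * T 1).trace.re - ((1 : Matrix n n ℂ)ᴴ * 1).trace.re := by
    simp [sub_mul, mul_sub, htp, trace_conjTranspose]
  have h2 := Complex.le_def.mp h0.trace_nonneg
  refine Complex.ext (le_antisymm (by rw [h1]; simpa using h) h2.1) h2.2.symm

theorem trace_sq_map_diagonal_le (hpos : ∀ A : Matrix n n ℂ, A.PosSemidef → (T A).PosSemidef)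
    (htp : ∀ A, (T A).trace = A.trace) (h1 : T 1 = 1) (c : n → ℝ) :
    (T (diagonal fun i => (c i : ℂ)) * T (diagonal fun i => (c i : ℂ))).trace.re
      ≤ ∑ i, c i ^ 2 := by
  let Q : n → Matrix n n ℂ := fun i => T (single i i 1)
  have hQ : ∀ i, (Q i).PosSemidef := fun i => hpos _ (by
    rw [← diagonal_single]
    refine PosSemidef.diagonal fun j => ?_
    rcases eq_or_ne j i with rfl | h <;> simp [*])
  have hd : ∀ a : n → ℂ, T (diagonal a) = ∑ i, a i • Q i := fun a => by
    rw [← sum_single_eq_diagonal, map_sum]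
    refine Finset.sum_congr rfl fun i _ => ?_
    rw [← map_smul, smul_single, smul_eq_mul, mul_one]
  have hs : ∑ i, Q i = 1 := by
    have := hd 1
    simpa [h1] using this.symm
  let m : n → n → ℝ := fun i j => (Q i * Q j).trace.re
  have hm0 : ∀ i j, 0 ≤ m i j := fun i j => (hQ i).trace_mul_re_nonneg (hQ j)
  have hmr : ∀ i, ∑ j, m i j = 1 := fun i => by
    simp only [m]
    rw [← Complex.re_sum, ← trace_sum, ← Finset.mul_sum, hs, mul_one, htp]
    simp
  have hmc : ∀ i j, m i j = m j i := fun i j => by simp only [m]; rw [trace_mul_comm]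
  have hc : ∀ j, ∑ i, m i j = 1 := fun j => by simp_rw [hmc _ j]; exact hmr j
  calc _ = ∑ i, ∑ j, c i * c j * m i j := by
        rw [hd]
        simp only [Finset.sum_mul, Finset.mul_sum, trace_sum, Complex.re_sum]
        rw [Finset.sum_comm]
        simp [m, mul_assoc, mul_left_comm]
    _ ≤ ∑ i, ∑ j, (c i ^ 2 * m i j / 2 + c j ^ 2 * m i j / 2) := by
        gcongr with i _ j _
        nlinarith [mul_nonneg (sq_nonneg (c i - c j)) (hm0 i j)]
    _ = ∑ i, c i ^ 2 := by
        simp_rw [Finset.sum_add_distrib]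
        rw [Finset.sum_comm (f := fun i j => c j ^ 2 * m i j / 2)]
        simp_rw [← Finset.sum_div, ← Finset.mul_sum, hmr, hc]
        simp only [mul_one]
        ring

theorem trace_sq_map_hermitian_le (hpos : ∀ A : Matrix n n ℂ, A.PosSemidef → (T A).PosSemidef)
    (htp : ∀ A, (T A).trace = A.trace) (h1 : T 1 = 1) {X : Matrix n n ℂ} (hX : X.IsHermitian) :
    (T X * T X).trace.re ≤ (X * X).trace.re := by
  let U : Matrix n n ℂ := hX.eigenvectorUnitary
  have hU : U * Uᴴ = 1 := Unitary.mul_star_self_of_mem hX.eigenvectorUnitary.2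
  have hU' : Uᴴ * U = 1 := Unitary.star_mul_self_of_mem hX.eigenvectorUnitary.2
  let D : Matrix n n ℂ := diagonal fun i => (hX.eigenvalues i : ℂ)
  have hXD : X = U * D * Uᴴ := hX.spectral_theorem
  let S : Matrix n n ℂ →ₗ[ℂ] Matrix n n ℂ := T ∘ₗ LinearMap.mulRight ℂ Uᴴ ∘ₗ LinearMap.mulLeft ℂ U
  have hS : ∀ A, S A = T (U * A * Uᴴ) := fun A => rfl
  have key := trace_sq_map_diagonal_le (T := S)
    (fun A hA => hpos _ (hA.mul_mul_conjTranspose_same U))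
    (fun A => by rw [hS, htp, trace_mul_comm, ← mul_assoc, hU', one_mul])
    (by rw [hS, mul_one, hU, h1]) hX.eigenvalues
  rw [hS, ← hXD] at key
  refine key.trans_eq ?_
  have : X * X = U * (D * D) * Uᴴ := by
    rw [hXD]
    calc _ = U * D * (Uᴴ * U) * D * Uᴴ := by noncomm_ring
      _ = _ := by rw [hU']; noncomm_ring
  rw [this, trace_mul_comm, ← mul_assoc, hU', one_mul]
  simp [D, sq]

theorem isHermitian_map (hpos : ∀ A : Matrix n n ℂ, A.PosSemidef → (T A).PosSemidef)
    {X : Matrix n n ℂ} (hX : X.IsHermitian) : (T X).IsHermitian := by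
  have hsq : ∀ Y : Matrix n n ℂ, Y.IsHermitian → (T (Y * Y)).IsHermitian := fun Y hY => by
    have := posSemidef_conjTranspose_mul_self Y
    rw [hY.eq] at this
    exact (hpos _ this).isHermitian
  have h : (4 : ℂ) • T X = T ((X + 1) * (X + 1)) - T ((X - 1) * (X - 1)) := by
    rw [← map_smul, ← map_sub]
    congr 1
    have : (X + 1) * (X + 1) - (X - 1) * (X - 1) = X + X + X + X := by noncomm_ring
    rw [this]
    module
  have h4 : T X = (1 / 4 : ℝ) • (T ((X + 1) * (X + 1)) - T ((X - 1) * (X - 1))) := by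
    rw [← h, ← Complex.coe_smul, smul_smul]
    norm_num
  rw [h4]
  exact ((hsq _ (hX.add isHermitian_one)).sub (hsq _ (hX.sub isHermitian_one))).smul
    (IsSelfAdjoint.all _)

/-- Positive, trace-preserving, unital maps are Hilbert–Schmidt contractions. -/
theorem trace_map_conjTranspose_mul_self_le
    (hpos : ∀ A : Matrix n n ℂ, A.PosSemidef → (T A).PosSemidef)
    (htp : ∀ A, (T A).trace = A.trace) (h1 : T 1 = 1) (A : Matrix n n ℂ) :
    ((T A)ᴴ * T A).trace.re ≤ (Aᴴ * A).trace.re := by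
  have hX : ((realPart A : selfAdjoint (Matrix n n ℂ)) : Matrix n n ℂ).IsHermitian :=
    (realPart A).2
  have hY : ((imaginaryPart A : selfAdjoint (Matrix n n ℂ)) : Matrix n n ℂ).IsHermitian :=
    (imaginaryPart A).2
  rw [← realPart_add_I_smul_imaginaryPart A, map_add, map_smul,
    trace_conjTranspose_mul_self_add_I_smul hX hY,
    trace_conjTranspose_mul_self_add_I_smul (isHermitian_map hpos hX) (isHermitian_map hpos hY)]
  exact add_le_add (trace_sq_map_hermitian_le hpos htp h1 hX)
    (trace_sq_map_hermitian_le hpos htp h1 hY)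

end HilbertSchmidt

/-- A positive trace-preserving linear map on `M_d(ℂ)` is a contraction in the
Hilbert–Schmidt (2→2) norm iff it is unital, and it is unital iff its representation as a
linear operator on Hilbert–Schmidt space is a convex combination of unitaries of that
`d²`-dimensional Hilbert space (i.e. of Hilbert–Schmidt-inner-product-preserving surjective
linear maps). -/
theorem stmt_0 (d : ℕ) (hd : 0 < d)
    (T : Matrix (Fin d) (Fin d) ℂ →ₗ[ℂ] Matrix (Fin d) (Fin d) ℂ)
    (hpos : ∀ A : Matrix (Fin d) (Fin d) ℂ, A.PosSemidef → (T A).PosSemidef)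
    (htp : ∀ A : Matrix (Fin d) (Fin d) ℂ, (T A).trace = A.trace) :
    ((∀ A : Matrix (Fin d) (Fin d) ℂ,
        Real.sqrt (((T A)ᴴ * T A).trace.re) ≤ Real.sqrt ((Aᴴ * A).trace.re)) ↔ T 1 = 1)
    ∧
    (T 1 = 1 ↔
      ∃ (n : ℕ) (p : Fin n → ℝ)
        (W : Fin n → (Matrix (Fin d) (Fin d) ℂ →ₗ[ℂ] Matrix (Fin d) (Fin d) ℂ)),
        (∀ i, 0 ≤ p i) ∧ ∑ i, p i = 1 ∧
        (∀ i (A B : Matrix (Fin d) (Fin d) ℂ), ((W i A)ᴴ * W i B).trace = (Aᴴ * B).trace) ∧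
        (∀ i, Function.Surjective (W i)) ∧
        ∀ A : Matrix (Fin d) (Fin d) ℂ, T A = ∑ i, (p i : ℂ) • W i A) := by
  have hcu : (∀ A : Matrix (Fin d) (Fin d) ℂ,
      Real.sqrt (((T A)ᴴ * T A).trace.re) ≤ Real.sqrt ((Aᴴ * A).trace.re)) ↔ T 1 = 1 :=
    ⟨fun h => map_one_of_contraction htp
      ((Real.sqrt_le_sqrt_iff (trace_conjTranspose_mul_self_re_nonneg _)).mp (h 1)),
     fun h A => Real.sqrt_le_sqrt (trace_map_conjTranspose_mul_self_le hpos htp h A)⟩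
  refine ⟨hcu, ?_⟩
  rw [← hcu]
  simp_rw [← norm_hilbertSchmidtEquiv, ← inner_hilbertSchmidtEquiv]
  let e := hilbertSchmidtEquiv (Fin d)
  constructor
  · intro h
    let f : EuclideanSpace ℂ (Fin d × Fin d) →L[ℂ] EuclideanSpace ℂ (Fin d × Fin d) :=
      LinearMap.toContinuousLinearMap (e.toLinearMap ∘ₗ T ∘ₗ e.symm.toLinearMap)
    have hf : ∀ x, f x = e (T (e.symm x)) := fun x => rfl
    obtain ⟨u, v, huv⟩ := exists_half_sum_linearIsometry f
      (f.opNorm_le_bound zero_le_one fun x => by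
        simpa [hf, e] using h (e.symm x))
    let w : Fin 2 → (EuclideanSpace ℂ (Fin d × Fin d) →ₗᵢ[ℂ] EuclideanSpace ℂ (Fin d × Fin d)) :=
      ![u, v]
    let W : Fin 2 → (Matrix (Fin d) (Fin d) ℂ →ₗ[ℂ] Matrix (Fin d) (Fin d) ℂ) := fun i =>
      e.symm.toLinearMap ∘ₗ (w i).toLinearMap ∘ₗ e.toLinearMap
    have hW : ∀ i A, e (W i A) = w i (e A) := fun i A => e.apply_symm_apply _
    have hin : ∀ i A B, inner ℂ (e (W i A)) (e (W i B)) = inner ℂ (e A) (e B) := fun i A B => by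
      rw [hW, hW, LinearIsometry.inner_map_map]
    refine ⟨2, fun _ => 1 / 2, W, fun _ => by norm_num, by norm_num, hin, fun i => ?_, fun A => ?_⟩
    · refine LinearMap.surjective_of_injective fun A B hAB => e.injective ((w i).injective ?_)
      rw [← hW, ← hW, hAB]
    · apply e.injective
      have := huv (e A)
      rw [hf, e.symm_apply_apply] at this
      rw [this, map_sum, Fin.sum_univ_two, map_smul, map_smul, hW, hW]
      simp [w]
  · rintro ⟨n, p, W, hp, hp1, hW, -, hT⟩ A
    have hn : ∀ i, ‖e (W i A)‖ = ‖e A‖ := fun i => by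
      rw [norm_eq_sqrt_re_inner (𝕜 := ℂ), hW, ← norm_eq_sqrt_re_inner]
    calc ‖e (T A)‖ = ‖∑ i, (p i : ℂ) • e (W i A)‖ := by
          rw [hT, map_sum]
          simp_rw [map_smul]
      _ ≤ ∑ i, ‖(p i : ℂ) • e (W i A)‖ := norm_sum_le _ _
      _ = ∑ i, p i * ‖e A‖ := by
        refine Finset.sum_congr rfl fun i _ => ?_
        rw [norm_smul, hn, Complex.norm_real, Real.norm_of_nonneg (hp i)]
      _ = ‖e A‖ := by rw [← Finset.sum_mul, hp1, one_mul]
end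

section
/- Every unital trace-preserving completely positive map T on M_d(ℂ) is an affine combination of unitary conjugations: there exist real numbers λ_i summing to 1 and unitaries U_i ∈ U(d) such that T(ρ) = Σ_i λ_i U_i ρ U_i† for all ρ. -/
open Matrix
open scoped ComplexOrder

/-- The action of `id_n ⊗ T` on block matrices: `T` is applied to each `d × d` block. -/
def blockApply (n d : ℕ) (T : Matrix (Fin d) (Fin d) ℂ → Matrix (Fin d) (Fin d) ℂ)
    (M : Matrix (Fin n × Fin d) (Fin n × Fin d) ℂ) :
    Matrix (Fin n × Fin d) (Fin n × Fin d) ℂ :=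
  Matrix.of fun p q => T (Matrix.of fun k l => M (p.1, k) (q.1, l)) p.2 q.2

/-- Complete positivity: `id_n ⊗ T` is positive for every `n`. -/
def IsCP (d : ℕ) (T : Matrix (Fin d) (Fin d) ℂ → Matrix (Fin d) (Fin d) ℂ) : Prop :=
  ∀ (n : ℕ) (M : Matrix (Fin n × Fin d) (Fin n × Fin d) ℂ),
    M.PosSemidef → (blockApply n d T M).PosSemidef

/-- Conjugation `ρ ↦ U ρ U†` by unitary matrices, as a monoid homomorphism. -/
noncomputable def unitaryConj (d : ℕ) :
    Matrix.unitaryGroup (Fin d) ℂ →* Module.End ℂ (Matrix (Fin d) (Fin d) ℂ) where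
  toFun U := LinearMap.mulLeft ℂ (U : Matrix (Fin d) (Fin d) ℂ) *
    LinearMap.mulRight ℂ (U : Matrix (Fin d) (Fin d) ℂ)ᴴ
  map_one' := by ext1 ρ; simp
  map_mul' U V := by
    refine LinearMap.ext fun ρ => ?_
    simp [Matrix.mul_assoc, Matrix.conjTranspose_mul]

theorem unitaryConj_apply {d : ℕ} (U : Matrix.unitaryGroup (Fin d) ℂ)
    (ρ : Matrix (Fin d) (Fin d) ℂ) :
    unitaryConj d U ρ = (U : Matrix (Fin d) (Fin d) ℂ) * ρ * (U : Matrix (Fin d) (Fin d) ℂ)ᴴ := by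
  simp [unitaryConj, Matrix.mul_assoc]

/-- The complex algebra of maps generated by the unitary conjugations. -/
noncomputable def unitaryConjAlgebra (d : ℕ) :
    Subalgebra ℂ (Module.End ℂ (Matrix (Fin d) (Fin d) ℂ)) :=
  Algebra.adjoin ℂ (MonoidHom.mrange (unitaryConj d) : Set _)

theorem unitaryConj_mem {d : ℕ} (U : Matrix.unitaryGroup (Fin d) ℂ) :
    unitaryConj d U ∈ unitaryConjAlgebra d :=
  Algebra.subset_adjoin ⟨U, rfl⟩

theorem mem_unitaryConjAlgebra_iff {d : ℕ} {T : Module.End ℂ (Matrix (Fin d) (Fin d) ℂ)} :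
    T ∈ unitaryConjAlgebra d ↔
      T ∈ Submodule.span ℂ (MonoidHom.mrange (unitaryConj d) : Set _) := by
  rw [unitaryConjAlgebra, ← Subalgebra.mem_toSubmodule, Algebra.adjoin_eq_span,
    Submonoid.closure_eq]

/-- For an orthogonal projection `P` and a phase `s`, the matrix `1 - P + s P` is unitary. -/
theorem phase_mem_unitaryGroup {d : ℕ} {P : Matrix (Fin d) (Fin d) ℂ} (hP : P.IsHermitian)
    (hPP : P * P = P) {s : ℂ} (hs : s * star s = 1) :
    (1 - P) + s • P ∈ Matrix.unitaryGroup (Fin d) ℂ := by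
  rw [Matrix.mem_unitaryGroup_iff, Matrix.star_eq_conjTranspose]
  simp [Matrix.conjTranspose_smul, hP.eq, mul_add, add_mul, mul_sub, sub_mul, hPP, smul_smul]
  simp at hs
  rw [mul_comm, hs]
  simp

/-- The map `ρ ↦ P ρ (1 - P)` is a combination of unitary conjugations by `1 - P + s P`. -/
theorem mulLeft_mul_mulRight_one_sub_mem {d : ℕ} {P : Matrix (Fin d) (Fin d) ℂ}
    (hP : P.IsHermitian) (hPP : P * P = P) :
    LinearMap.mulLeft ℂ P * LinearMap.mulRight ℂ (1 - P) ∈ unitaryConjAlgebra d := by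
  have key (s : ℂ) (hs : s * star s = 1) :
      unitaryConj d ⟨_, phase_mem_unitaryGroup hP hPP hs⟩ ∈ unitaryConjAlgebra d :=
    unitaryConj_mem _
  have h := (unitaryConjAlgebra d).smul_mem
    (add_mem (add_mem (key 1 (by simp))
      ((unitaryConjAlgebra d).smul_mem (key (-1) (by simp)) (-1)))
    (add_mem ((unitaryConjAlgebra d).smul_mem (key Complex.I (by simp)) (-Complex.I))
      ((unitaryConjAlgebra d).smul_mem (key (-Complex.I) (by simp)) Complex.I))) (1 / 4 : ℂ)
  convert h using 1
  refine LinearMap.ext fun ρ => ?_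
  have hQ : (1 - P)ᴴ = 1 - P := by simp [hP.eq]
  simp only [LinearMap.smul_apply, LinearMap.add_apply, unitaryConj_apply, Module.End.mul_apply,
    LinearMap.mulLeft_apply, LinearMap.mulRight_apply, Matrix.conjTranspose_add, hQ,
    Matrix.conjTranspose_smul, hP.eq]
  generalize 1 - P = Q
  simp only [add_mul, mul_add, smul_mul_assoc, mul_smul_comm, ← mul_assoc]
  simp only [star_one, star_neg, Complex.star_def, Complex.conj_I]
  match_scalars <;> ring_nf <;> (simp; try norm_num)

/-- A subspace of matrices stable under unitary conjugation that contains one off-diagonal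
matrix unit contains all traceless matrices. -/
theorem mem_of_trace_eq_zero {d : ℕ} (S : Submodule ℂ (Matrix (Fin d) (Fin d) ℂ))
    (hS : ∀ U, ∀ B ∈ S, unitaryConj d U B ∈ S) {i j : Fin d} (hij : i ≠ j)
    (h : Matrix.single i j (1 : ℂ) ∈ S) {B : Matrix (Fin d) (Fin d) ℂ} (hB : B.trace = 0) :
    B ∈ S := by
  have hS' (T) (hT : T ∈ unitaryConjAlgebra d) (C) (hC : C ∈ S) : T C ∈ S := by
    rw [mem_unitaryConjAlgebra_iff] at hT
    induction hT using Submodule.span_induction with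
    | mem T hT =>
      obtain ⟨U, rfl⟩ := hT
      exact hS U C hC
    | zero => simp
    | add T T' _ _ h h' => exact S.add_mem h h'
    | smul c T _ h => exact S.smul_mem c h
  have hoff (a b : Fin d) (hab : a ≠ b) : Matrix.single a b (1 : ℂ) ∈ S := by
    obtain ⟨σ, hσa, hσb⟩ : ∃ σ : Equiv.Perm (Fin d), σ a = i ∧ σ b = j := by
      refine ⟨(Equiv.swap a i).trans (Equiv.swap (Equiv.swap a i b) j), ?_, by simp⟩
      have : i ≠ Equiv.swap a i b := by
        intro h
        exact hab ((Equiv.swap a i).injective (by simpa using h))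
      simp [Equiv.swap_apply_of_ne_of_ne this hij]
    have hU : σ.permMatrix ℂ ∈ Matrix.unitaryGroup (Fin d) ℂ := by
      rw [Matrix.mem_unitaryGroup_iff, Matrix.star_eq_conjTranspose,
        Matrix.conjTranspose_permMatrix, ← Matrix.permMatrix_mul]
      simp
    have := hS ⟨_, hU⟩ _ h
    rw [unitaryConj_apply] at this
    convert this using 1
    subst hσa hσb
    rw [Matrix.conjTranspose_permMatrix, PEquiv.toMatrix_toPEquiv_mul,
      PEquiv.mul_toMatrix_toPEquiv, Matrix.submatrix_submatrix]
    ext x y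
    simp [Matrix.single_apply, Equiv.Perm.inv_def]
  have hdiag (a b : Fin d) : Matrix.single a a (1 : ℂ) - Matrix.single b b 1 ∈ S := by
    rcases eq_or_ne a b with rfl | hab
    · simp
    set P : Matrix (Fin d) (Fin d) ℂ := (1 / 2 : ℂ) • (Matrix.single a a (1 : ℂ) +
      Matrix.single a b 1 + Matrix.single b a 1 + Matrix.single b b 1) with hPdef
    have hP : P.IsHermitian := by
      simp only [Matrix.IsHermitian, hPdef, Matrix.conjTranspose_smul, Matrix.conjTranspose_add,
        Matrix.conjTranspose_single]
      simp
      abel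
    have hPP : P * P = P := by
      simp only [hPdef, smul_mul_assoc, mul_smul_comm, add_mul, mul_add, mul_one,
        Matrix.single_mul_single_same, ne_eq, hab, hab.symm, not_false_eq_true,
        Matrix.single_mul_single_of_ne]
      module
    have h1 := hS' _ (mulLeft_mul_mulRight_one_sub_mem hP hPP) _ (hoff a b hab)
    have h2 := S.sub_mem (hoff a b hab) (S.add_mem (hoff b a hab.symm) (S.smul_mem 4 h1))
    convert h2 using 1
    simp only [Module.End.mul_apply, LinearMap.mulLeft_apply, LinearMap.mulRight_apply,
      hPdef, smul_mul_assoc, mul_smul_comm, add_mul, mul_add, mul_sub, mul_one,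
      mul_zero, Matrix.single_mul_single_same, ne_eq, hab.symm, not_false_eq_true,
      Matrix.single_mul_single_of_ne]
    module
  have hdec : B = ∑ a, ∑ b, B a b • (Matrix.single a b (1 : ℂ) -
      if a = b then Matrix.single i i 1 else 0) := by
    conv_lhs => rw [Matrix.matrix_eq_sum_single B]
    simp only [smul_sub, Finset.sum_sub_distrib, smul_ite, smul_zero, Finset.sum_ite_eq,
      Finset.mem_univ, if_true, ← Finset.sum_smul]
    have : ∑ a, B a a = 0 := hB
    simp [this]
  rw [hdec]
  refine S.sum_mem fun a _ => S.sum_mem fun b _ => S.smul_mem _ ?_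
  split_ifs with hab
  · subst hab
    exact hdiag a i
  · simpa using hoff a b hab

/-- The rank-one map `ρ ↦ tr(A ρ) B`, bilinearly in `A` and `B`. -/
noncomputable def traceSMul (d : ℕ) :
    Matrix (Fin d) (Fin d) ℂ →ₗ[ℂ] Matrix (Fin d) (Fin d) ℂ →ₗ[ℂ]
      Module.End ℂ (Matrix (Fin d) (Fin d) ℂ) :=
  LinearMap.mk₂ ℂ
    (fun A B => ((Matrix.traceLinearMap (Fin d) ℂ ℂ) ∘ₗ LinearMap.mulLeft ℂ A).smulRight B)
    (fun A A' B => by ext1 ρ; simp [add_mul, add_smul])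
    (fun c A B => by ext1 ρ; simp [smul_smul])
    (fun A B B' => by ext1 ρ; simp)
    (fun c A B => by ext1 ρ; simp [smul_smul, mul_comm])

theorem traceSMul_apply {d : ℕ} (A B ρ : Matrix (Fin d) (Fin d) ℂ) :
    traceSMul d A B ρ = (A * ρ).trace • B := by
  simp [traceSMul]

theorem traceSMul_single_mem {d : ℕ} {i j : Fin d} (hij : i ≠ j) :
    traceSMul d (Matrix.single j i 1) (Matrix.single i j 1) ∈ unitaryConjAlgebra d := by
  have hH (k : Fin d) : (Matrix.single k k (1 : ℂ)).IsHermitian := by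
    simp [Matrix.IsHermitian, Matrix.conjTranspose_single]
  have h1 := mulLeft_mul_mulRight_one_sub_mem (hH i) (by simp)
  have h2 := mulLeft_mul_mulRight_one_sub_mem (P := 1 - Matrix.single j j (1 : ℂ))
    (Matrix.isHermitian_one.sub (hH j)) (by simp [mul_sub, sub_mul])
  convert mul_mem h2 h1 using 1
  refine LinearMap.ext fun ρ => ?_
  have e : (1 - Matrix.single j j (1 : ℂ)) * (Matrix.single i i 1 *
      (ρ * (1 - Matrix.single i i 1)) * Matrix.single j j 1) =
      Matrix.single i i 1 * ρ * Matrix.single j j 1 := by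
    simp [mul_sub, sub_mul, hij, ← mul_assoc, hij.symm]
  simp only [traceSMul_apply, Module.End.mul_apply, LinearMap.mulLeft_apply,
    LinearMap.mulRight_apply, sub_sub_cancel]
  rw [e]
  simp [Matrix.trace_single_mul]

theorem traceSMul_mem {d : ℕ} {A B : Matrix (Fin d) (Fin d) ℂ} (hA : A.trace = 0)
    (hB : B.trace = 0) : traceSMul d A B ∈ unitaryConjAlgebra d := by
  by_cases hd : Subsingleton (Fin d)
  · have : A = 0 := by
      ext i j
      rw [Subsingleton.elim j i]
      rwa [Matrix.trace, Fintype.sum_subsingleton _ i] at hA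
    simp [this]
  · obtain ⟨i, j, hij⟩ : ∃ i j : Fin d, i ≠ j := by
      simpa [subsingleton_iff] using hd
    let V := Subalgebra.toSubmodule (unitaryConjAlgebra d)
    have hA' : A ∈ V.comap ((traceSMul d).flip (Matrix.single i j 1)) := by
      refine mem_of_trace_eq_zero _ (fun U C hC => ?_) hij.symm (traceSMul_single_mem hij) hA
      have := (unitaryConjAlgebra d).mul_mem (Submodule.mem_comap.1 hC) (unitaryConj_mem U⁻¹)
      refine Submodule.mem_comap.2 ?_
      convert (Subalgebra.mem_toSubmodule _).2 this using 1
      refine LinearMap.ext fun ρ => ?_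
      simp only [LinearMap.flip_apply, traceSMul_apply, Module.End.mul_apply, unitaryConj_apply]
      congr 1
      rw [mul_assoc, mul_assoc, Matrix.trace_mul_comm]
      simp [Matrix.star_eq_conjTranspose, mul_assoc]
    refine mem_of_trace_eq_zero (V.comap (traceSMul d A)) (fun U C hC => ?_) hij hA' hB
    refine Submodule.mem_comap.2 ?_
    convert (Subalgebra.mem_toSubmodule _).2 ((unitaryConjAlgebra d).mul_mem
      (unitaryConj_mem U) (Submodule.mem_comap.1 hC)) using 1
    refine LinearMap.ext fun ρ => ?_
    simp [traceSMul_apply]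

/-- A unital trace-preserving linear map is a complex combination of unitary conjugations. -/
theorem mem_unitaryConjAlgebra {d : ℕ} (hd : 0 < d)
    (T : Module.End ℂ (Matrix (Fin d) (Fin d) ℂ))
    (htp : ∀ A : Matrix (Fin d) (Fin d) ℂ, (T A).trace = A.trace) (hu : T 1 = 1) :
    T ∈ unitaryConjAlgebra d := by
  have hdC : (d : ℂ) ≠ 0 := by exact_mod_cast hd.ne'
  suffices h : T - 1 ∈ unitaryConjAlgebra d by
    simpa using add_mem h (one_mem (unitaryConjAlgebra d))
  have h1 : (T - 1) 1 = 0 := by simp [hu]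
  have htr (A : Matrix (Fin d) (Fin d) ℂ) : ((T - 1) A).trace = 0 := by simp [htp]
  generalize T - 1 = R at h1 htr
  have hdec : R = ∑ i, ∑ j, traceSMul d
      (Matrix.single j i 1 - if i = j then (d : ℂ)⁻¹ • 1 else 0) (R (Matrix.single i j 1)) := by
    refine LinearMap.ext fun ρ => ?_
    have h1' : ∑ i, R (Matrix.single i i 1) = 0 := by
      rw [← map_sum, Matrix.sum_single_one, h1]
    conv_lhs => rw [Matrix.matrix_eq_sum_single ρ]
    have hs (i j : Fin d) : Matrix.single i j (ρ i j) = ρ i j • Matrix.single i j (1 : ℂ) := by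
      simp
    simp only [hs, map_sum, map_smul, LinearMap.sum_apply, traceSMul_apply, sub_mul,
      Matrix.trace_sub, sub_smul, Finset.sum_sub_distrib, Matrix.trace_single_mul,
      ite_mul, zero_mul, apply_ite Matrix.trace, Matrix.trace_zero, ite_smul, zero_smul,
      Finset.sum_ite_eq, Finset.mem_univ, if_true, ← Finset.smul_sum, h1', smul_zero, sub_zero]
    simp
  rw [hdec]
  refine sum_mem fun i _ => sum_mem fun j _ => traceSMul_mem ?_ (htr _)
  split_ifs with hij
  · subst hij
    simp [hdC]
  · simp [Matrix.trace_single_eq_of_ne _ _ _ (Ne.symm hij)]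

/-- Completely positive linear maps preserve adjoints. -/
theorem IsCP.map_conjTranspose {d : ℕ}
    {T : Matrix (Fin d) (Fin d) ℂ →ₗ[ℂ] Matrix (Fin d) (Fin d) ℂ} (hcp : IsCP d T)
    (ρ : Matrix (Fin d) (Fin d) ℂ) : T ρᴴ = (T ρ)ᴴ := by
  let v : Fin d × Fin d → ℂ := fun p => if p.1 = p.2 then 1 else 0
  have hv (i j : Fin d) : (Matrix.of fun k l => Matrix.vecMulVec v (star v) (i, k) (j, l)) =
      Matrix.single i j (1 : ℂ) := by
    ext k l
    simp [v, Matrix.vecMulVec_apply, Matrix.single_apply, ← ite_and, and_comm]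
  have hH := (hcp d _ (Matrix.posSemidef_vecMulVec_self_star v)).isHermitian
  have hE (i j : Fin d) : T (Matrix.single j i 1) = (T (Matrix.single i j 1))ᴴ := by
    ext k l
    have := hH.apply (j, k) (i, l)
    simp only [blockApply, Matrix.of_apply, hv] at this
    rw [Matrix.conjTranspose_apply, this]
  have hs (i j : Fin d) (c : ℂ) : Matrix.single i j c = c • Matrix.single i j (1 : ℂ) := by
    simp
  rw [Matrix.matrix_eq_sum_single ρ]
  simp only [Matrix.conjTranspose_sum, map_sum, Matrix.conjTranspose_single]
  refine Finset.sum_congr rfl fun i _ => Finset.sum_congr rfl fun j _ => ?_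
  rw [hs, hs i j, map_smul, map_smul, Matrix.conjTranspose_smul, hE]

/-- Every unital trace-preserving completely positive map on `M_d(ℂ)` is an affine
combination of unitary conjugations. -/
theorem stmt_2 (d : ℕ) (hd : 0 < d)
    (T : Matrix (Fin d) (Fin d) ℂ →ₗ[ℂ] Matrix (Fin d) (Fin d) ℂ)
    (hcp : IsCP d T) (htp : ∀ A : Matrix (Fin d) (Fin d) ℂ, (T A).trace = A.trace)
    (hu : T 1 = 1) :
    ∃ (n : ℕ) (lam : Fin n → ℝ) (U : Fin n → Matrix (Fin d) (Fin d) ℂ),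
      ∑ i, lam i = 1 ∧ (∀ i, U i ∈ Matrix.unitaryGroup (Fin d) ℂ) ∧
      ∀ ρ : Matrix (Fin d) (Fin d) ℂ, T ρ = ∑ i, (lam i : ℂ) • (U i * ρ * (U i)ᴴ) := by
  obtain ⟨n, f, g, hfg⟩ := (Submodule.mem_span_set' (R := ℂ)).1
    (mem_unitaryConjAlgebra_iff.1 (mem_unitaryConjAlgebra hd T htp hu))
  choose U hU using fun i => (g i).2
  have hT (ρ : Matrix (Fin d) (Fin d) ℂ) :
      T ρ = ∑ i, f i • ((U i : Matrix (Fin d) (Fin d) ℂ) * ρ * (U i : Matrix _ _ ℂ)ᴴ) := by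
    rw [← hfg, LinearMap.sum_apply]
    simp only [LinearMap.smul_apply, ← hU, unitaryConj_apply]
  have hT' (ρ : Matrix (Fin d) (Fin d) ℂ) :
      T ρ = ∑ i, star (f i) • ((U i : Matrix (Fin d) (Fin d) ℂ) * ρ * (U i : Matrix _ _ ℂ)ᴴ) := by
    rw [← Matrix.conjTranspose_conjTranspose ρ, hcp.map_conjTranspose, hT]
    simp [Matrix.conjTranspose_sum, Matrix.conjTranspose_smul, Matrix.conjTranspose_mul, mul_assoc]
  have hre (ρ : Matrix (Fin d) (Fin d) ℂ) : T ρ = ∑ i, ((f i).re : ℂ) •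
      ((U i : Matrix (Fin d) (Fin d) ℂ) * ρ * (U i : Matrix _ _ ℂ)ᴴ) := by
    have : T ρ = (1 / 2 : ℂ) • (T ρ + T ρ) := by module
    rw [this]
    nth_rewrite 1 [hT]
    rw [hT', ← Finset.sum_add_distrib, Finset.smul_sum]
    refine Finset.sum_congr rfl fun i _ => ?_
    rw [← add_smul, smul_smul, Complex.re_eq_add_conj, Complex.star_def]
    congr 1
    ring
  refine ⟨n, fun i => (f i).re, fun i => U i, ?_, fun i => (U i).2, hre⟩
  have h1 := hre 1
  have hUU (i : Fin n) : (U i : Matrix (Fin d) (Fin d) ℂ) * (U i : Matrix _ _ ℂ)ᴴ = 1 :=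
    Matrix.mem_unitaryGroup_iff.1 (U i).2
  simp only [hu, mul_one, hUU, ← Finset.sum_smul] at h1
  have h2 := congrFun (congrFun h1 ⟨0, hd⟩) ⟨0, hd⟩
  simp only [Matrix.smul_apply, Matrix.one_apply_eq, smul_eq_mul, mul_one] at h2
  exact_mod_cast h2.symm
end

section
/- For integers d ≥ 1 and nonnegative reals σ₁ ≥ … ≥ σ_d, the minimum of tr[AĀ] over all A ∈ M_d(ℂ) with singular values σ₁,…,σ_d equals -2Σ_{i=1}^{d/2} σ_{2i-1}σ_{2i} if d is even, and -2Σ_{i=1}^{(d-1)/2} σ_{2i-1}σ_{2i} + σ_d² if d is odd. -/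
open Matrix
open scoped ComplexOrder

/-- The singular values of a square complex matrix (in some order): the square roots of the
eigenvalues of `Aᴴ * A`. -/
noncomputable def singVals {d : ℕ} (A : Matrix (Fin d) (Fin d) ℂ) : Fin d → ℝ :=
  fun i =>
    Real.sqrt ((Matrix.posSemidef_conjTranspose_mul_self A).isHermitian.eigenvalues i)

section Contraction

open scoped Matrix.Norms.L2Operator

variable {m n : Type*} [Fintype m] [Fintype n]

theorem sum_sum_norm_sq_mul_le [DecidableEq m] {M : Matrix m m ℂ} (hM : ‖M‖ ≤ 1)
    (N : Matrix m n ℂ) :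
    ∑ i, ∑ j, ‖(M * N) i j‖ ^ 2 ≤ ∑ i, ∑ j, ‖N i j‖ ^ 2 := by
  rw [Finset.sum_comm, Finset.sum_comm (γ := m) (s := Finset.univ) (t := Finset.univ)
    (f := fun (i : m) (j : n) => ‖N i j‖ ^ 2)]
  refine Finset.sum_le_sum fun j _ => ?_
  have h := Matrix.l2_opNorm_mulVec M (WithLp.toLp 2 fun i => N i j)
  have h' := h.trans (mul_le_of_le_one_left (norm_nonneg _) hM)
  have h2 := pow_le_pow_left₀ (norm_nonneg _) h' 2
  rw [EuclideanSpace.norm_sq_eq, EuclideanSpace.norm_sq_eq] at h2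
  exact h2

theorem sum_sum_norm_sq_eq_trace (M : Matrix m n ℂ) :
    ((∑ i, ∑ j, ‖M i j‖ ^ 2 : ℝ) : ℂ) = (Mᴴ * M).trace := by
  rw [Finset.sum_comm]
  simp [Matrix.trace, Matrix.mul_apply, Complex.conj_mul']

theorem sum_sum_norm_sq_le_of_det_eq_zero [DecidableEq m] {M : Matrix m m ℂ} (hM : ‖M‖ ≤ 1)
    (hdet : M.det = 0) :
    ∑ i, ∑ j, ‖M i j‖ ^ 2 ≤ (Fintype.card m : ℝ) - 1 := by
  obtain ⟨x, hx, hMx⟩ := Matrix.exists_mulVec_eq_zero_iff.mpr hdet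
  set c : ℂ := star x ⬝ᵥ x with hc
  have hc0 : c ≠ 0 := by simpa [hc, dotProduct_star_self_eq_zero] using hx
  have hcs : star c = c := by rw [hc, ← star_dotProduct]
  set Q : Matrix m m ℂ := 1 - c⁻¹ • vecMulVec x (star x) with hQ
  have hQH : Qᴴ = Q := by
    simp [hQ, conjTranspose_vecMulVec, hcs]
  have hMQ : M * Q = M := by
    simp [hQ, mul_sub, mul_vecMulVec, hMx]
  have hQQ : Q * Q = Q := by
    have h : Q *ᵥ x = 0 := by
      simp [hQ, sub_mulVec, smul_mulVec, vecMulVec_mulVec, ← hc, hc0]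
    conv_lhs => arg 2; rw [hQ]
    simp [mul_sub, mul_vecMulVec, h]
  have htr : Q.trace = (Fintype.card m : ℂ) - 1 := by
    simp [hQ, trace_vecMulVec, dotProduct_comm x, ← hc, hc0]
  have h1 := sum_sum_norm_sq_mul_le hM Q
  have h2 := sum_sum_norm_sq_eq_trace Q
  rw [hQH, hQQ, htr] at h2
  rw [hMQ] at h1
  exact h1.trans_eq (by exact_mod_cast h2)

theorem det_eq_zero_of_transpose_eq_neg [DecidableEq m] {M : Matrix m m ℂ} (hM : Mᵀ = -M)
    (hodd : Odd (Fintype.card m)) : M.det = 0 := by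
  have h := M.det_transpose
  rw [hM, det_neg, hodd.neg_one_pow] at h
  linear_combination (-1 / 2 : ℂ) * h

theorem l2_opNorm_le_one_of_conjTranspose_mul_self [DecidableEq n] {M : Matrix m n ℂ}
    (hM : Mᴴ * M = 1) :
    ‖M‖ ≤ 1 := by
  have h := Matrix.l2_opNorm_conjTranspose_mul_self M
  have h1 : ‖(1 : Matrix n n ℂ)‖ ≤ 1 := by
    rw [← diagonal_one, Matrix.l2_opNorm_diagonal]
    exact (pi_norm_le_iff_of_nonneg zero_le_one).mpr fun i => by simp
  rw [hM] at h
  nlinarith [norm_nonneg M]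

theorem l2_opNorm_submatrix_le_one [DecidableEq m] [DecidableEq n] {M : Matrix m m ℂ} (hM : Mᴴ * M = 1)
    {f : n → m} (hf : Function.Injective f) : ‖M.submatrix f f‖ ≤ 1 := by
  set E : Matrix m n ℂ := (1 : Matrix m m ℂ).submatrix id f with hE
  have hEE : Eᴴ * E = 1 := by
    ext i j
    simp [hE, Matrix.mul_apply, Matrix.one_apply, hf.eq_iff]
  have hsub : M.submatrix f f = Eᴴ * (M * E) := by
    ext i j
    simp [hE, Matrix.mul_apply, Matrix.one_apply]
  have h1 := l2_opNorm_le_one_of_conjTranspose_mul_self hEE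
  have h2 := l2_opNorm_le_one_of_conjTranspose_mul_self hM
  rw [hsub]
  calc _ ≤ ‖Eᴴ‖ * ‖M * E‖ := Matrix.l2_opNorm_mul _ _
    _ ≤ 1 * (1 * 1) := by
      gcongr
      · rwa [Matrix.l2_opNorm_conjTranspose]
      · exact (Matrix.l2_opNorm_mul _ _).trans (by gcongr)
    _ = 1 := by norm_num

/-- The skew-symmetric part of a principal submatrix of odd size of a unitary matrix is a singular
contraction, which bounds its Frobenius norm. -/
theorem sum_sum_norm_sub_sq_le [DecidableEq m] [DecidableEq n] {M : Matrix m m ℂ}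
    (hM : M ∈ unitaryGroup m ℂ) {f : n → m} (hf : Function.Injective f) (hodd : Odd (Fintype.card n)) :
    ∑ i, ∑ j, ‖M (f i) (f j) - M (f j) (f i)‖ ^ 2 ≤ 4 * ((Fintype.card n : ℝ) - 1) := by
  set K : Matrix n n ℂ := (2⁻¹ : ℂ) • (M.submatrix f f - Mᵀ.submatrix f f) with hK
  have hMT : Mᵀᴴ * Mᵀ = 1 := by
    have h := (mem_unitaryGroup_iff (A := M)).mp hM
    have h2 := congrArg Matrix.transpose h
    rwa [transpose_mul, transpose_one, star_eq_conjTranspose] at h2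
  have hM1 : Mᴴ * M = 1 := (mem_unitaryGroup_iff').mp hM
  have hnorm : ‖K‖ ≤ 1 := by
    have h1 := l2_opNorm_submatrix_le_one hM1 hf
    have h2 := l2_opNorm_submatrix_le_one hMT hf
    have h3 := norm_sub_le (M.submatrix f f) (Mᵀ.submatrix f f)
    rw [hK, norm_smul, norm_inv, Complex.norm_ofNat]
    linarith
  have hskew : Kᵀ = -K := by
    ext i j
    simp [hK]
    ring
  have h := sum_sum_norm_sq_le_of_det_eq_zero hnorm (det_eq_zero_of_transpose_eq_neg hskew hodd)
  have h4 : ∀ i j, ‖K i j‖ ^ 2 = 4⁻¹ * ‖M (f i) (f j) - M (f j) (f i)‖ ^ 2 := by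
    intro i j
    simp [hK, mul_pow]
    norm_num
  simp only [h4, ← Finset.mul_sum] at h
  linarith

end Contraction

theorem exists_perm_comp_eq_of_map_eq {ι α : Type*} [Fintype ι] [DecidableEq α] {f g : ι → α}
    (h : Finset.univ.val.map f = Finset.univ.val.map g) : ∃ e : Equiv.Perm ι, f ∘ e = g := by
  have hcard : ∀ c, Nonempty ({i // g i = c} ≃ {i // f i = c}) := by
    intro c
    have hc := congrArg (Multiset.count c) h
    rw [Multiset.count_map, Multiset.count_map] at hc
    refine ⟨Fintype.equivOfCardEq ?_⟩
    rw [Fintype.card_subtype, Fintype.card_subtype]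
    simp only [eq_comm (a := c)] at hc
    exact hc.symm
  exact ⟨Equiv.ofFiberEquiv fun c => (hcard c).some, funext fun i => Equiv.ofFiberEquiv_map _ i⟩

section SingularValues

variable {d : ℕ}

theorem singVals_sq (A : Matrix (Fin d) (Fin d) ℂ) (i : Fin d) :
    singVals A i ^ 2 =
      (Matrix.posSemidef_conjTranspose_mul_self A).isHermitian.eigenvalues i :=
  Real.sq_sqrt ((Matrix.posSemidef_conjTranspose_mul_self A).eigenvalues_nonneg i)

theorem exists_perm_singVals_eq {A : Matrix (Fin d) (Fin d) ℂ} {τ : Fin d → ℝ}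
    (hτ : ∀ i, 0 ≤ τ i) (hA : Aᴴ * A = diagonal fun i => ((τ i ^ 2 : ℝ) : ℂ)) :
    ∃ e : Equiv.Perm (Fin d), ∀ i, singVals A (e i) = τ i := by
  have h := (Matrix.posSemidef_conjTranspose_mul_self A).isHermitian.roots_charpoly_eq_eigenvalues
  have h2 : (Aᴴ * A).charpoly.roots =
      Finset.univ.val.map fun i => ((τ i ^ 2 : ℝ) : ℂ) := by
    rw [hA, charpoly_diagonal, Polynomial.roots_prod]
    · simp only [Polynomial.roots_X_sub_C, Multiset.bind_singleton]
    · exact Finset.prod_ne_zero_iff.mpr fun i _ => Polynomial.X_sub_C_ne_zero _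
  obtain ⟨e, he⟩ := exists_perm_comp_eq_of_map_eq (h.symm.trans h2)
  refine ⟨e, fun i => ?_⟩
  have hi : (Matrix.posSemidef_conjTranspose_mul_self A).isHermitian.eigenvalues (e i) = τ i ^ 2 :=
    Complex.ofReal_injective (congrFun he i)
  rw [singVals, hi, Real.sqrt_sq (hτ i)]

/-- Singular value decomposition of a square matrix. -/
theorem exists_unitary_mul_diagonal_singVals (A : Matrix (Fin d) (Fin d) ℂ) :
    ∃ U ∈ unitaryGroup (Fin d) ℂ, ∃ V ∈ unitaryGroup (Fin d) ℂ,
      A = U * diagonal (fun i => (singVals A i : ℂ)) * Vᴴ := by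
  set hA := (Matrix.posSemidef_conjTranspose_mul_self A).isHermitian
  set V : Matrix (Fin d) (Fin d) ℂ := ↑hA.eigenvectorUnitary
  have hVmem : V ∈ unitaryGroup (Fin d) ℂ := hA.eigenvectorUnitary.2
  have hVV : V * Vᴴ = 1 := mem_unitaryGroup_iff.mp hVmem
  have hspec : (A * V)ᴴ * (A * V) = diagonal fun i => ((singVals A i ^ 2 : ℝ) : ℂ) := by
    have h := hA.conjStarAlgAut_star_eigenvectorUnitary
    rw [Unitary.conjStarAlgAut_star_apply] at h
    simp only [singVals_sq]
    rw [conjTranspose_mul, mul_assoc, ← mul_assoc Aᴴ, ← mul_assoc]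
    exact h
  set v : Fin d → EuclideanSpace ℂ (Fin d) := fun i => WithLp.toLp 2 fun k => (A * V) k i with hv
  have hinner : ∀ i j, inner ℂ (v i) (v j) = if i = j then ((singVals A i ^ 2 : ℝ) : ℂ) else 0 := by
    intro i j
    have h := congrFun (congrFun hspec i) j
    rw [diagonal_apply, mul_apply] at h
    rw [← h, PiLp.inner_apply]
    exact Finset.sum_congr rfl fun k _ => mul_comm _ _
  set w : Fin d → EuclideanSpace ℂ (Fin d) := fun i => ((singVals A i : ℂ)⁻¹) • v i with hw
  set s : Set (Fin d) := {i | singVals A i ≠ 0}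
  have hon : Orthonormal ℂ (s.domRestrict w) := by
    rw [orthonormal_iff_ite]
    rintro ⟨i, hi⟩ ⟨j, hj⟩
    have hi' : (singVals A i : ℂ) ≠ 0 := by exact_mod_cast hi
    simp only [Set.domRestrict_apply, hw, inner_smul_left, inner_smul_right, hinner,
      Subtype.mk.injEq]
    split_ifs with h
    · subst h
      simp
      field_simp
    · simp
  obtain ⟨b, hb⟩ := hon.exists_orthonormalBasis_extension_of_card_eq (by simp)
  have hvb : ∀ i, v i = (singVals A i : ℂ) • b i := by
    intro i
    by_cases hi : singVals A i = 0
    · have h := hinner i i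
      simp only [hi, if_true] at h
      simpa [hi] using h
    · rw [hb i hi, hw, smul_inv_smul₀ (by exact_mod_cast hi)]
  refine ⟨(EuclideanSpace.basisFun (Fin d) ℂ).toBasis.toMatrix b,
    (EuclideanSpace.basisFun (Fin d) ℂ).toMatrix_orthonormalBasis_mem_unitary b, V, hVmem, ?_⟩
  have hAV : A * V = (EuclideanSpace.basisFun (Fin d) ℂ).toBasis.toMatrix b *
      diagonal (fun i => (singVals A i : ℂ)) := by
    ext k i
    have h := congrArg (fun x : EuclideanSpace ℂ (Fin d) => x k) (hvb i)
    simpa [hv, Module.Basis.toMatrix_apply, mul_comm] using h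
  rw [← hAV, mul_assoc, hVV, mul_one]

/-- `tr[A Ā]` in terms of the singular values of `A` and a unitary matrix. -/
theorem exists_unitary_trace_mul_map_conj (A : Matrix (Fin d) (Fin d) ℂ) {τ : Fin d → ℝ}
    (e : Equiv.Perm (Fin d)) (he : ∀ i, singVals A (e i) = τ i) :
    ∃ W ∈ unitaryGroup (Fin d) ℂ, (A * A.map (starRingEnd ℂ)).trace.re =
      ∑ i, ∑ j, τ i * τ j * (W i j * star (W j i)).re := by
  obtain ⟨U, hU, V, hV, hA⟩ := exists_unitary_mul_diagonal_singVals A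
  set D : Matrix (Fin d) (Fin d) ℂ := diagonal fun i => (singVals A i : ℂ) with hD
  set W : Matrix (Fin d) (Fin d) ℂ := Vᴴ * U.map (starRingEnd ℂ) with hW
  have hUc : U.map (starRingEnd ℂ) ∈ unitaryGroup (Fin d) ℂ := by
    have h := congrArg (fun M => M.map (starRingEnd ℂ)) (mem_unitaryGroup_iff.mp hU)
    rw [Matrix.map_mul, Matrix.map_one _ (map_zero _) (map_one _)] at h
    exact mem_unitaryGroup_iff.mpr h
  have hWmem : W ∈ unitaryGroup (Fin d) ℂ := mul_mem (Unitary.star_mem hV) hUc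
  have htr : (A * A.map (starRingEnd ℂ)).trace = (D * W * D * W.map (starRingEnd ℂ)).trace := by
    have hDc : D.map (starRingEnd ℂ) = D := by
      rw [hD, diagonal_map (map_zero _)]
      simp
    have hWc : W.map (starRingEnd ℂ) = Vᴴ.map (starRingEnd ℂ) * U := by
      rw [hW, Matrix.map_mul]
      congr 1
      ext i j
      simp
    rw [hWc]
    conv_lhs => rw [hA]
    rw [Matrix.map_mul, Matrix.map_mul, hDc, ← mul_assoc (D * W * D), trace_mul_comm _ U, hW]
    simp only [mul_assoc]
  refine ⟨W.submatrix e e, ?_, ?_⟩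
  · rw [mem_unitaryGroup_iff, star_eq_conjTranspose, conjTranspose_submatrix,
      submatrix_mul_equiv, ← star_eq_conjTranspose, mem_unitaryGroup_iff.mp hWmem,
      submatrix_one_equiv]
  · rw [htr, trace]
    simp only [← he, submatrix_apply]
    rw [Equiv.sum_comp e fun i => ∑ j, singVals A i * singVals A (e j) *
      (W i (e j) * star (W (e j) i)).re, Complex.re_sum]
    refine Finset.sum_congr rfl fun i _ => ?_
    rw [Equiv.sum_comp e fun j => singVals A i * singVals A j *
      (W i j * star (W j i)).re, diag_apply, mul_apply, Complex.re_sum]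
    refine Finset.sum_congr rfl fun j _ => ?_
    rw [hD, mul_diagonal, diagonal_mul, ← Complex.re_ofReal_mul]
    congr 1
    simp
    ring

end SingularValues

section Pairing

open Finset

/-- The involution of `{0, …, d - 1}` exchanging `2i` and `2i + 1`; it fixes `d - 1` for odd `d`. -/
def partner (d i : ℕ) : ℕ :=
  if i % 2 = 1 then i - 1 else if i + 1 < d then i + 1 else i

/-- The matrix of the extremal form: `-1` at exchanged pairs and `1` at the fixed point. -/
def pairWeight (d i j : ℕ) : ℝ :=
  if partner d i = j then if i = j then 1 else -1 else 0

theorem partner_lt {d i : ℕ} (hi : i < d) : partner d i < d := by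
  unfold partner; split_ifs <;> omega

theorem partner_partner {d i : ℕ} (hi : i < d) : partner d (partner d i) = i := by
  unfold partner; split_ifs <;> omega

theorem pairWeight_comm {d i j : ℕ} (hi : i < d) (hj : j < d) :
    pairWeight d i j = pairWeight d j i := by
  have h : partner d i = j ↔ partner d j = i :=
    ⟨fun h => h ▸ partner_partner hi, fun h => h ▸ partner_partner hj⟩
  simp only [pairWeight, h, eq_comm]

theorem sum_range_mul_nonneg {d : ℕ} {σ a : ℕ → ℝ} (hnn : ∀ i, i < d → 0 ≤ σ i)
    (hmono : ∀ i j, i ≤ j → j < d → σ j ≤ σ i)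
    (ha : ∀ k ≤ d, 0 ≤ ∑ i ∈ range k, a i) : 0 ≤ ∑ i ∈ range d, σ i * a i := by
  have key : ∀ n, n < d → σ n * ∑ i ∈ range (n + 1), a i ≤ ∑ i ∈ range (n + 1), σ i * a i := by
    intro n
    induction n with
    | zero => simp
    | succ n ih =>
      intro hn
      rw [sum_range_succ, sum_range_succ (fun i => σ i * a i), mul_add]
      have h1 := mul_le_mul_of_nonneg_right (hmono n (n + 1) n.le_succ hn)
        (ha (n + 1) hn.le)
      linarith [ih (by omega)]
  cases d with
  | zero => simp
  | succ n =>
    exact (mul_nonneg (hnn n n.lt_succ_self) (ha _ le_rfl)).trans (key n n.lt_succ_self)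

theorem sum_range_sum_range_mul_nonneg {d : ℕ} {σ : ℕ → ℝ} {a : ℕ → ℕ → ℝ}
    (hnn : ∀ i, i < d → 0 ≤ σ i) (hmono : ∀ i j, i ≤ j → j < d → σ j ≤ σ i)
    (ha : ∀ k ≤ d, ∀ l ≤ d, 0 ≤ ∑ i ∈ range k, ∑ j ∈ range l, a i j) :
    0 ≤ ∑ i ∈ range d, ∑ j ∈ range d, σ i * σ j * a i j := by
  have h : 0 ≤ ∑ i ∈ range d, σ i * ∑ j ∈ range d, σ j * a i j := by
    refine sum_range_mul_nonneg hnn hmono fun k hk => ?_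
    rw [sum_comm]
    simp only [← mul_sum]
    refine sum_range_mul_nonneg hnn hmono fun l hl => ?_
    rw [sum_comm]
    exact ha k hk l hl
  simpa only [mul_sum, mul_assoc] using h

theorem sum_pairWeight {d i l : ℕ} (f : ℕ → ℝ) :
    ∑ j ∈ range l, f j * pairWeight d i j =
      if partner d i < l then f (partner d i) * if i = partner d i then 1 else -1 else 0 := by
  simp only [pairWeight, mul_ite, mul_zero]
  rw [sum_ite_eq]
  simp

theorem sum_sum_pairWeight_of_lt {d k l : ℕ} (hkl : k < l) (hl : l ≤ d) :
    ∑ i ∈ range k, ∑ j ∈ range l, pairWeight d i j = -k := by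
  have h : ∀ i ∈ range k, ∑ j ∈ range l, pairWeight d i j = -1 := by
    intro i hi
    have hi := mem_range.mp hi
    have h := sum_pairWeight (d := d) (i := i) (l := l) 1
    simp only [Pi.one_apply, one_mul] at h
    have h1 : partner d i < l := by unfold partner; split_ifs <;> omega
    have h2 : i ≠ partner d i := by unfold partner; split_ifs <;> omega
    rw [h, if_pos h1, if_neg h2]
  rw [sum_congr rfl h]
  simp

theorem sum_sum_pairWeight_self_two_mul {d m : ℕ} (hm : 2 * m ≤ d) :
    ∑ i ∈ range (2 * m), ∑ j ∈ range (2 * m), pairWeight d i j = -(2 * m : ℕ) := by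
  have h : ∀ i ∈ range (2 * m), ∑ j ∈ range (2 * m), pairWeight d i j = -1 := by
    intro i hi
    have hi := mem_range.mp hi
    have h := sum_pairWeight (d := d) (i := i) (l := 2 * m) 1
    simp only [Pi.one_apply, one_mul] at h
    have h1 : partner d i < 2 * m := by unfold partner; split_ifs <;> omega
    have h2 : i ≠ partner d i := by unfold partner; split_ifs <;> omega
    rw [h, if_pos h1, if_neg h2]
  rw [sum_congr rfl h]
  simp

theorem sum_sum_pairWeight_self_two_mul_add_one {d m : ℕ} (hm : 2 * m + 1 ≤ d) :
    ∑ i ∈ range (2 * m + 1), ∑ j ∈ range (2 * m + 1), pairWeight d i j =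
      -(2 * m : ℕ) + if 2 * m + 1 = d then 1 else 0 := by
  rw [sum_range_succ, sum_sum_pairWeight_of_lt (Nat.lt_succ_self _) hm]
  have h := sum_pairWeight (d := d) (i := 2 * m) (l := 2 * m + 1) 1
  simp only [Pi.one_apply, one_mul] at h
  rw [h]
  congr 1
  have hp : partner d (2 * m) = if 2 * m + 1 < d then 2 * m + 1 else 2 * m := by
    unfold partner; rw [if_neg (by omega)]
  rw [hp]
  rcases hm.lt_or_eq with h | h
  · rw [if_pos h, if_neg (by omega), if_neg (by omega)]
  · rw [if_neg (by omega : ¬2 * m + 1 < d), if_pos (Nat.lt_succ_self _), if_pos rfl, if_pos h]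

theorem sum_sum_mul_pairWeight (d : ℕ) (σ : ℕ → ℝ) :
    ∑ i ∈ range d, ∑ j ∈ range d, σ i * σ j * pairWeight d i j =
      if Even d then
        -2 * ∑ i ∈ range (d / 2), σ (2 * i) * σ (2 * i + 1)
      else
        -2 * ∑ i ∈ range ((d - 1) / 2), σ (2 * i) * σ (2 * i + 1) + σ (d - 1) ^ 2 := by
  have hrow : ∀ i ∈ range d, ∑ j ∈ range d, σ i * σ j * pairWeight d i j =
      σ i * σ (partner d i) * if i = partner d i then 1 else -1 := by
    intro i hi
    have h := sum_pairWeight (d := d) (i := i) (l := d) fun j => σ i * σ j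
    rw [h, if_pos (partner_lt (mem_range.mp hi))]
  rw [sum_congr rfl hrow]
  have heven : ∀ m, 2 * m ≤ d → ∑ i ∈ range (2 * m),
      σ i * σ (partner d i) * (if i = partner d i then 1 else -1) =
        -2 * ∑ i ∈ range m, σ (2 * i) * σ (2 * i + 1) := by
    intro m
    induction m with
    | zero => simp
    | succ m ih =>
      intro hm
      have h0 : partner d (2 * m) = 2 * m + 1 := by unfold partner; split_ifs <;> omega
      have h1 : partner d (2 * m + 1) = 2 * m := by unfold partner; split_ifs <;> omega
      rw [mul_add, mul_one, sum_range_succ, sum_range_succ, ih (by omega), sum_range_succ, h0, h1,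
        if_neg (by omega), if_neg (by omega)]
      ring
  split_ifs with h
  · obtain ⟨m, rfl⟩ := h.two_dvd
    rw [heven m le_rfl, Nat.mul_div_cancel_left _ two_pos]
  · obtain ⟨m, rfl⟩ := Nat.not_even_iff_odd.mp h
    have h0 : partner (2 * m + 1) (2 * m) = 2 * m := by unfold partner; split_ifs <;> omega
    rw [sum_range_succ, heven m (by omega), h0, if_pos rfl, Nat.add_sub_cancel,
      Nat.mul_div_cancel_left _ two_pos]
    ring

end Pairing

section LowerBound

open Finset

theorem re_mul_star_eq_norm_sub (a b : ℂ) :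
    2 * (a * star b).re = ‖a‖ ^ 2 + ‖b‖ ^ 2 - ‖a - b‖ ^ 2 := by
  simp only [Complex.sq_norm, Complex.normSq_apply, Complex.star_def, Complex.mul_re,
    Complex.conj_re, Complex.conj_im, Complex.sub_re, Complex.sub_im]
  ring

theorem neg_norm_sq_add_norm_sq_le (a b : ℂ) :
    -(‖a‖ ^ 2 + ‖b‖ ^ 2) ≤ 2 * (a * star b).re := by
  have h := re_mul_star_eq_norm_sub a (-b)
  rw [star_neg, mul_neg, Complex.neg_re, norm_neg, sub_neg_eq_add] at h
  linarith [sq_nonneg ‖a + b‖]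

variable {d : ℕ} {w : ℕ → ℕ → ℂ}

theorem neg_le_sum_sum_re_mul_star (hrow : ∀ i < d, ∑ j ∈ range d, ‖w i j‖ ^ 2 = 1)
    (hcol : ∀ j < d, ∑ i ∈ range d, ‖w i j‖ ^ 2 = 1) {k l : ℕ} (hk : k ≤ d) (hl : l ≤ d) :
    -(k : ℝ) ≤ ∑ i ∈ range k, ∑ j ∈ range l, (w i j * star (w j i)).re := by
  have h : ∀ i ∈ range k, -1 ≤ ∑ j ∈ range l, (w i j * star (w j i)).re := by
    intro i hi
    have hi : i < d := (mem_range.mp hi).trans_le hk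
    have h1 := sum_le_sum fun j (_ : j ∈ range l) => neg_norm_sq_add_norm_sq_le (w i j) (w j i)
    rw [sum_neg_distrib, sum_add_distrib, ← mul_sum] at h1
    have hsub : range l ⊆ range d := range_subset_range.mpr hl
    have h2 := sum_le_sum_of_subset_of_nonneg (f := fun j => ‖w i j‖ ^ 2) hsub
      fun _ _ _ => by positivity
    have h3 := sum_le_sum_of_subset_of_nonneg (f := fun j => ‖w j i‖ ^ 2) hsub
      fun _ _ _ => by positivity
    rw [hrow i hi] at h2
    rw [hcol i hi] at h3
    linarith
  have := sum_le_sum h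
  simpa using this

theorem sum_range_sum_range_eq {k : ℕ} (f : ℕ → ℕ → ℝ) :
    ∑ i ∈ range k, ∑ j ∈ range k, f i j = ∑ i : Fin k, ∑ j : Fin k, f i j := by
  rw [sum_range]
  simp only [sum_range]

theorem sum_sum_pairWeight_le (hw : (of fun i j : Fin d => w i j) ∈ unitaryGroup (Fin d) ℂ)
    {k l : ℕ} (hk : k ≤ d) (hl : l ≤ d) :
    ∑ i ∈ range k, ∑ j ∈ range l, pairWeight d i j ≤
      ∑ i ∈ range k, ∑ j ∈ range l, (w i j * star (w j i)).re := by
  have hrow : ∀ i < d, ∑ j ∈ range d, ‖w i j‖ ^ 2 = 1 := by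
    intro i hi
    have h := congrFun (congrFun (mem_unitaryGroup_iff.mp hw) ⟨i, hi⟩) ⟨i, hi⟩
    rw [mul_apply, one_apply_eq] at h
    rw [sum_range]
    have h2 : ((∑ j : Fin d, ‖w i j‖ ^ 2 : ℝ) : ℂ) = 1 := by
      rw [← h]
      simp [star_apply, Complex.mul_conj']
    exact_mod_cast h2
  have hcol : ∀ j < d, ∑ i ∈ range d, ‖w i j‖ ^ 2 = 1 := by
    intro i hi
    have h := congrFun (congrFun (mem_unitaryGroup_iff'.mp hw) ⟨i, hi⟩) ⟨i, hi⟩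
    rw [mul_apply, one_apply_eq] at h
    rw [sum_range]
    have h2 : ((∑ j : Fin d, ‖w j i‖ ^ 2 : ℝ) : ℂ) = 1 := by
      rw [← h]
      simp [star_apply, Complex.conj_mul']
    exact_mod_cast h2
  rcases lt_trichotomy k l with hkl | rfl | hkl
  · rw [sum_sum_pairWeight_of_lt hkl hl]
    exact neg_le_sum_sum_re_mul_star hrow hcol hk hl
  · rcases Nat.even_or_odd' k with ⟨m, rfl | rfl⟩
    · rw [sum_sum_pairWeight_self_two_mul hk]
      exact neg_le_sum_sum_re_mul_star hrow hcol hk hl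
    · rw [sum_sum_pairWeight_self_two_mul_add_one hk]
      set k := 2 * m + 1 with hkm
      have h1 := sum_sum_norm_sub_sq_le hw (Fin.castLE_injective hk) (by simp [hkm])
      simp only [of_apply, Fin.val_castLE, Fintype.card_fin] at h1
      rw [← sum_range_sum_range_eq fun i j => ‖w i j - w j i‖ ^ 2] at h1
      have h2 : 2 * ∑ i ∈ range k, ∑ j ∈ range k, (w i j * star (w j i)).re =
          2 * ∑ i ∈ range k, ∑ j ∈ range k, ‖w i j‖ ^ 2 -
            ∑ i ∈ range k, ∑ j ∈ range k, ‖w i j - w j i‖ ^ 2 := by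
        simp only [mul_sum, re_mul_star_eq_norm_sub, sum_sub_distrib, sum_add_distrib]
        rw [sum_comm (f := fun i j => ‖w j i‖ ^ 2)]
        simp only [← mul_sum]
        ring
      have h3 : -∑ i ∈ range k, ∑ j ∈ range k, ‖w i j‖ ^ 2 ≤
          ∑ i ∈ range k, ∑ j ∈ range k, (w i j * star (w j i)).re := by
        have h := sum_le_sum fun i (_ : i ∈ range k) => sum_le_sum fun j (_ : j ∈ range k) =>
          neg_norm_sq_add_norm_sq_le (w i j) (w j i)
        simp only [sum_neg_distrib, sum_add_distrib, ← mul_sum] at h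
        rw [sum_comm (f := fun i j => ‖w j i‖ ^ 2)] at h
        linarith
      have h4 : (k : ℝ) = (2 * m : ℕ) + 1 := by push_cast [hkm]; ring
      split_ifs with hkd
      · have h5 : ∑ i ∈ range k, ∑ j ∈ range k, ‖w i j‖ ^ 2 = k := by
          rw [hkd, sum_congr rfl fun i hi => hrow i (mem_range.mp hi)]
          simp
        linarith
      · linarith
  · rw [sum_comm, sum_comm (s := range k) (f := fun i j => (w i j * star (w j i)).re)]
    rw [sum_congr rfl fun j hj => sum_congr rfl fun i hi => pairWeight_comm
      ((mem_range.mp hi).trans_le hk) ((mem_range.mp hj).trans_le hl),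
      sum_sum_pairWeight_of_lt hkl hk]
    have h := neg_le_sum_sum_re_mul_star hrow hcol hl hk
    refine h.trans_eq (sum_congr rfl fun i _ => sum_congr rfl fun j _ => ?_)
    simp [mul_comm]

theorem sum_sum_mul_pairWeight_le {σ : ℕ → ℝ} (hnn : ∀ i, i < d → 0 ≤ σ i)
    (hmono : ∀ i j, i ≤ j → j < d → σ j ≤ σ i)
    {W : Matrix (Fin d) (Fin d) ℂ} (hW : W ∈ unitaryGroup (Fin d) ℂ) :
    ∑ i ∈ range d, ∑ j ∈ range d, σ i * σ j * pairWeight d i j ≤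
      ∑ i : Fin d, ∑ j : Fin d, σ i * σ j * (W i j * star (W j i)).re := by
  obtain ⟨w, hw⟩ : ∃ w : ℕ → ℕ → ℂ, W = of fun i j : Fin d => w i j :=
    ⟨fun i j => if h : i < d ∧ j < d then W ⟨i, h.1⟩ ⟨j, h.2⟩ else 0, by ext i j; simp⟩
  subst hw
  simp only [of_apply]
  rw [← sum_range_sum_range_eq fun i j => σ i * σ j * (w i j * star (w j i)).re, ← sub_nonneg]
  simp only [← sum_sub_distrib, ← mul_sub]
  refine sum_range_sum_range_mul_nonneg hnn hmono fun k hk l hl => ?_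
  simp only [sum_sub_distrib]
  exact sub_nonneg.mpr (sum_sum_pairWeight_le hW hk hl)

end LowerBound

section Extremal

open Finset

/-- The matrix with entry `± σ j` at `(partner d j, j)` and zeros elsewhere. -/
def extremalMatrix (d : ℕ) (σ : ℕ → ℝ) : Matrix (Fin d) (Fin d) ℂ :=
  of fun i j => if partner d j = (i : ℕ) then
    (((if (j : ℕ) = partner d j then 1 else (-1) ^ (j : ℕ)) * σ j : ℝ) : ℂ) else 0

theorem conjTranspose_extremalMatrix_mul_self (d : ℕ) (σ : ℕ → ℝ) :
    (extremalMatrix d σ)ᴴ * extremalMatrix d σ =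
      diagonal fun i : Fin d => ((σ i ^ 2 : ℝ) : ℂ) := by
  ext i j
  rw [mul_apply, diagonal_apply]
  rw [sum_eq_single (⟨partner d i, partner_lt i.2⟩ : Fin d)]
  · rcases eq_or_ne i j with rfl | hij
    · rw [if_pos rfl, conjTranspose_apply, extremalMatrix, of_apply, if_pos rfl, Complex.star_def,
        Complex.conj_ofReal, ← Complex.ofReal_mul]
      congr 1
      split_ifs
      · ring
      · rw [mul_mul_mul_comm, ← mul_pow]
        norm_num
        ring
    · have h : partner d j ≠ partner d i := fun h => hij <| Fin.ext <| by
        rw [← partner_partner i.2, ← h, partner_partner j.2]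
      simp [extremalMatrix, h, hij]
  · intro k _ hk
    have h : partner d i ≠ k := fun h => hk (Fin.ext h.symm)
    simp [extremalMatrix, h]
  · simp

theorem trace_extremalMatrix (d : ℕ) (σ : ℕ → ℝ) :
    (extremalMatrix d σ * (extremalMatrix d σ).map (starRingEnd ℂ)).trace.re =
      ∑ i ∈ range d, ∑ j ∈ range d, σ i * σ j * pairWeight d i j := by
  rw [sum_range_sum_range_eq, trace, Complex.re_sum]
  refine sum_congr rfl fun i _ => ?_
  rw [diag_apply, mul_apply, Complex.re_sum]
  refine sum_congr rfl fun j _ => ?_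
  have hiff : partner d j = i ↔ partner d i = j :=
    ⟨fun h => h ▸ partner_partner j.2, fun h => h ▸ partner_partner i.2⟩
  simp only [extremalMatrix, map_apply, of_apply, pairWeight, hiff]
  by_cases h : partner d i = j
  · have hj : partner d j = i := hiff.mpr h
    have hsign : (if (j : ℕ) = partner d j then (1 : ℝ) else (-1) ^ (j : ℕ)) *
        (if (i : ℕ) = partner d i then 1 else (-1) ^ (i : ℕ)) =
          if (i : ℕ) = j then 1 else -1 := by
      rw [hj, h]
      rcases eq_or_ne (i : ℕ) j with hij | hij
      · simp [hij]
      · rw [if_neg hij.symm, if_neg hij, if_neg hij, ← pow_add]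
        refine Odd.neg_one_pow (Nat.odd_iff.mpr ?_)
        have := i.2
        have := j.2
        unfold partner at h
        split_ifs at h <;> omega
    rw [if_pos h, if_pos h, if_pos h, Complex.conj_ofReal, ← Complex.ofReal_mul,
      Complex.ofReal_re, ← hsign]
    ring
  · simp [h]

end Extremal

/-- For prescribed singular values `σ 0 ≥ … ≥ σ (d-1) ≥ 0`, the minimum of
`tr[A Ā]` (which is always real) over all `A ∈ M_d(ℂ)` with these singular values equals
`-2 ∑ σ_{2i} σ_{2i+1}` for `d` even, and `-2 ∑ σ_{2i} σ_{2i+1} + σ_{d-1}²` for `d` odd. -/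
theorem stmt_9 (d : ℕ) (σ : ℕ → ℝ)
    (hnn : ∀ i, i < d → 0 ≤ σ i)
    (hmono : ∀ i j, i ≤ j → j < d → σ j ≤ σ i) :
    IsLeast
      {t : ℝ | ∃ A : Matrix (Fin d) (Fin d) ℂ,
        (∃ e : Equiv.Perm (Fin d), ∀ i : Fin d, singVals A (e i) = σ (i : ℕ)) ∧
        t = (A * A.map (starRingEnd ℂ)).trace.re}
      (if Even d then
        -2 * ∑ i ∈ Finset.range (d / 2), σ (2 * i) * σ (2 * i + 1)
      else
        -2 * ∑ i ∈ Finset.range ((d - 1) / 2), σ (2 * i) * σ (2 * i + 1) + σ (d - 1) ^ 2) := by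
  rw [← sum_sum_mul_pairWeight]
  refine ⟨⟨extremalMatrix d σ, ?_, (trace_extremalMatrix d σ).symm⟩, ?_⟩
  · exact exists_perm_singVals_eq (fun i => hnn i i.2) (conjTranspose_extremalMatrix_mul_self d σ)
  · rintro t ⟨A, ⟨e, he⟩, rfl⟩
    obtain ⟨W, hW, hA⟩ := exists_unitary_trace_mul_map_conj A e he
    rw [hA]
    exact sum_sum_mul_pairWeight_le hnn hmono hW
end
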